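/- Let m ≤ ℓ be natural numbers and for 0 ≤ k ≤ ℓ−m set a_k := (−ℓ)_{m+k}·(ℓ+1)_{m+k} / (k!·(m+k)!) ∈ ℝ, where (a)_k is the ascending Pochhammer symbol. Define u : ℝ → ℝ by u(τ) := (sech τ)^{m+1}·Σ_{k=0}^{ℓ−m} a_k·((1−tanh τ)/2)^k. Then u is twice differentiable and for all τ ∈ ℝ, u''(τ) + 2·tanh τ·u'(τ) + ℓ(ℓ+1)·sech²τ·u(τ) = (m²−1)·u(τ). -/

import Mathlib

/-!
Write `u = sech ^ (m + 1) · y(tanh τ)`. Differentiation in `τ` acts on the factor `y(t)` as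
`y ↦ (1 - t²) y' - (m + 1) t y`, and applying it twice turns the radial equation into `1 - t²` times
the Gegenbauer equation `(1 - t²) y'' - 2 (m + 1) t y' + (ℓ (ℓ + 1) - m (m + 1)) y = 0`. In the
variable `z = (1 - t) / 2` this is the hypergeometric equation with parameters
`m - ℓ`, `m + ℓ + 1`, `m + 1`, which on power series is the two-term recurrence satisfied by
`a_k`. The truncated sum is the whole series because `(-ℓ)_{m + k} = 0` for `m + k > ℓ`.
-/

open Polynomial

section PolynomialEquations

theorem coeff_X_mul_derivative {R : Type*} [CommSemiring R] (p : R[X]) (k : ℕ) :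
    (X * derivative p).coeff k = k * p.coeff k := by
  cases k with
  | zero => simp
  | succ k => rw [coeff_X_mul, coeff_derivative, Nat.cast_succ, mul_comm]

theorem hypergeometric_equation_of_coeff_recurrence {R : Type*} [CommRing R] {a b c : R} {p : R[X]}
    (hp : ∀ k : ℕ, (k + 1) * (c + k) * p.coeff (k + 1) = (a + k) * (b + k) * p.coeff k) :
    X * (1 - X) * derivative (derivative p) + (C c - C (a + b + 1) * X) * derivative p
      - C (a * b) * p = 0 := by
  -- With `θ = X d/dX`, which multiplies the `k`-th coefficient by `k`, every term is diagonal
  -- up to a single shift of the index.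
  have euler_form : derivative (X * derivative p) + C (c - 1) * derivative p =
      X * derivative (X * derivative p) + C (a + b) * (X * derivative p) + C (a * b) * p := by
    ext k
    simp only [coeff_add, coeff_C_mul, coeff_X_mul_derivative, coeff_derivative]
    push_cast
    linear_combination hp k
  simp only [derivative_mul, derivative_X, C_sub, C_add, C_1] at euler_form ⊢
  linear_combination euler_form

theorem gegenbauer_equation_of_hypergeometric {K : Type*} [Field K] [NeZero (2 : K)] {c d : K}
    {p : K[X]}
    (hp : X * (1 - X) * derivative (derivative p) + C c * (1 - 2 * X) * derivative p
      + C d * p = 0) :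
    (1 - X ^ 2) * derivative (derivative (p.comp (C 2⁻¹ * (1 - X))))
      - 2 * C c * X * derivative (p.comp (C 2⁻¹ * (1 - X)))
      + C d * p.comp (C 2⁻¹ * (1 - X)) = 0 := by
  have two_mul_half : (2 : K[X]) * C 2⁻¹ = 1 := by
    rw [← C_ofNat, ← C_mul, mul_inv_cancel₀ two_ne_zero, C_1]
  have derivative_half (r : K[X]) : derivative (r.comp (C 2⁻¹ * (1 - X))) =
      -C 2⁻¹ * (derivative r).comp (C 2⁻¹ * (1 - X)) := by
    simp [derivative_comp]
  have hp_comp := congrArg (·.comp (C 2⁻¹ * (1 - X))) hp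
  simp only [add_comp, mul_comp, sub_comp, X_comp, C_comp, one_comp, ofNat_comp, zero_comp]
    at hp_comp
  rw [derivative_half, neg_mul, derivative_neg, derivative_C_mul, derivative_half]
  linear_combination hp_comp + (C 2⁻¹ * (1 - X) * (derivative (derivative p)).comp
    (C 2⁻¹ * (1 - X)) + C c * (derivative p).comp (C 2⁻¹ * (1 - X))) * two_mul_half

end PolynomialEquations

section LegendreSeries

variable {K : Type*} [Field K]

/-- The coefficient of `((1 - t) / 2) ^ k` in the expansion of the associated Legendre function
`P^m_ν(t)` divided by `(1 - t²) ^ (m / 2)`, up to normalization. The degree `ν` need not be an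
integer. -/
noncomputable def legendreCoeff (m : ℕ) (ν : K) (k : ℕ) : K :=
  (ascPochhammer K (m + k)).eval (-ν) * (ascPochhammer K (m + k)).eval (ν + 1) /
    (k.factorial * (m + k).factorial)

theorem legendreCoeff_succ [CharZero K] (m : ℕ) (ν : K) (k : ℕ) :
    (k + 1) * (m + 1 + k) * legendreCoeff m ν (k + 1) =
      (m - ν + k) * (m + ν + 1 + k) * legendreCoeff m ν k := by
  have k_factorial_ne : (k.factorial : K) ≠ 0 := mod_cast k.factorial_ne_zero
  have mk_factorial_ne : ((m + k).factorial : K) ≠ 0 := mod_cast (m + k).factorial_ne_zero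
  have k_succ_ne : (k + 1 : K) ≠ 0 := mod_cast k.succ_ne_zero
  have mk_succ_ne : (m + k + 1 : K) ≠ 0 := mod_cast (m + k).succ_ne_zero
  simp only [legendreCoeff, ← add_assoc, ascPochhammer_succ_eval, Nat.factorial_succ]
  push_cast
  field_simp
  ring

theorem legendreCoeff_natCast_eq_zero {m ℓ k : ℕ} (h : ℓ < m + k) :
    legendreCoeff m (ℓ : K) k = 0 := by
  rw [legendreCoeff, ascPochhammer_eval_neg_coe_nat_of_lt h, zero_mul, zero_div]

/-- The terminating series `∑ legendreCoeff m ℓ k * z ^ k` at integer degree `ℓ`, as a polynomial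
in `z = (1 - t) / 2`. -/
noncomputable def legendreSeries (K : Type*) [Field K] (m ℓ : ℕ) : K[X] :=
  ∑ k ∈ Finset.range (ℓ - m + 1), C (legendreCoeff m (ℓ : K) k) * X ^ k

theorem coeff_legendreSeries (m ℓ k : ℕ) :
    (legendreSeries K m ℓ).coeff k = legendreCoeff m (ℓ : K) k := by
  simp only [legendreSeries, finsetSum_coeff, coeff_C_mul_X_pow, Finset.sum_ite_eq,
    Finset.mem_range, ite_eq_left_iff]
  exact fun hk => (legendreCoeff_natCast_eq_zero (by omega)).symm

/-- The factor of the associated Legendre function `P^m_ℓ(t)` that remains, up to normalization,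
after division by `(1 - t²) ^ (m / 2)`, as a polynomial in `t`. -/
noncomputable def legendreFactor (K : Type*) [Field K] (m ℓ : ℕ) : K[X] :=
  (legendreSeries K m ℓ).comp (C 2⁻¹ * (1 - X))

theorem eval_legendreFactor (m ℓ : ℕ) (t : K) :
    (legendreFactor K m ℓ).eval t =
      ∑ k ∈ Finset.range (ℓ - m + 1), legendreCoeff m (ℓ : K) k * ((1 - t) / 2) ^ k := by
  simp [legendreFactor, legendreSeries, eval_finsetSum, div_eq_inv_mul]

theorem legendreFactor_gegenbauer_equation [CharZero K] (m ℓ : ℕ) :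
    (1 - X ^ 2) * derivative (derivative (legendreFactor K m ℓ))
      - 2 * C (m + 1 : K) * X * derivative (legendreFactor K m ℓ)
      + C (ℓ * (ℓ + 1) - m * (m + 1) : K) * legendreFactor K m ℓ = 0 := by
  refine gegenbauer_equation_of_hypergeometric (p := legendreSeries K m ℓ) ?_
  have hypergeometric := hypergeometric_equation_of_coeff_recurrence (p := legendreSeries K m ℓ)
    (a := (m - ℓ : K)) (b := (m + ℓ + 1 : K)) (c := (m + 1 : K))
    (by simpa only [coeff_legendreSeries] using legendreCoeff_succ m (ℓ : K))
  simp only [map_add, map_sub, map_mul, map_one] at hypergeometric ⊢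
  linear_combination hypergeometric

end LegendreSeries

section HyperbolicSubstitution

theorem one_div_cosh_sq (τ : ℝ) : (1 / Real.cosh τ) ^ 2 = 1 - Real.tanh τ ^ 2 := by
  have cosh_ne : Real.cosh τ ≠ 0 := (Real.cosh_pos τ).ne'
  rw [Real.tanh_eq_sinh_div_cosh]
  field_simp
  linear_combination -Real.cosh_sq τ

theorem tanh_mem_Ioo (τ : ℝ) : Real.tanh τ ∈ Set.Ioo (-1) 1 :=
  ⟨Real.neg_one_lt_tanh τ, Real.tanh_lt_one τ⟩

theorem hasDerivAt_tanh (τ : ℝ) : HasDerivAt Real.tanh (1 - Real.tanh τ ^ 2) τ := by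
  have cosh_ne : Real.cosh τ ≠ 0 := (Real.cosh_pos τ).ne'
  rw [funext Real.tanh_eq_sinh_div_cosh]
  refine ((Real.hasDerivAt_sinh τ).div (Real.hasDerivAt_cosh τ) cosh_ne).congr_deriv ?_
  field_simp

theorem hasDerivAt_one_div_cosh_pow (n : ℕ) (τ : ℝ) :
    HasDerivAt (fun τ => (1 / Real.cosh τ) ^ n)
      (-(n * Real.tanh τ) * (1 / Real.cosh τ) ^ n) τ := by
  have cosh_ne : Real.cosh τ ≠ 0 := (Real.cosh_pos τ).ne'
  simp only [one_div, inv_pow]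
  refine (((Real.hasDerivAt_cosh τ).fun_pow n).fun_inv (pow_ne_zero n cosh_ne)).congr_deriv ?_
  rw [Real.tanh_eq_sinh_div_cosh]
  cases n with
  | zero => simp
  | succ n =>
    rw [Nat.add_sub_cancel]
    field_simp
    ring

/-- The function `sech τ ^ n * f (tanh τ)`. With `n = m + 1` and `f` the polynomial factor of
`P^m_ℓ` it is the radial function `sech τ * P^m_ℓ (tanh τ)`. -/
noncomputable def sechPowMulCompTanh (n : ℕ) (f : ℝ → ℝ) (τ : ℝ) : ℝ :=
  (1 / Real.cosh τ) ^ n * f (Real.tanh τ)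

variable {f f' f'' : ℝ → ℝ}

theorem hasDerivAt_sechPowMulCompTanh (n : ℕ) {τ y' : ℝ}
    (hf : HasDerivAt f y' (Real.tanh τ)) :
    HasDerivAt (sechPowMulCompTanh n f) ((1 / Real.cosh τ) ^ n *
      ((1 - Real.tanh τ ^ 2) * y' - n * Real.tanh τ * f (Real.tanh τ))) τ := by
  refine ((hasDerivAt_one_div_cosh_pow n τ).mul (hf.comp τ (hasDerivAt_tanh τ))).congr_deriv ?_
  rw [Function.comp_apply]
  ring

theorem deriv_sechPowMulCompTanh (n : ℕ)
    (hf : ∀ t ∈ Set.Ioo (-1) 1, HasDerivAt f (f' t) t) :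
    deriv (sechPowMulCompTanh n f) =
      sechPowMulCompTanh n (fun t => (1 - t ^ 2) * f' t - n * t * f t) :=
  funext fun τ => (hasDerivAt_sechPowMulCompTanh n (hf _ (tanh_mem_Ioo τ))).deriv

theorem hasDerivAt_deriv_sechPowMulCompTanh (n : ℕ)
    (hf : ∀ t ∈ Set.Ioo (-1) 1, HasDerivAt f (f' t) t)
    (hf' : ∀ t ∈ Set.Ioo (-1) 1, HasDerivAt f' (f'' t) t) (τ : ℝ) :
    HasDerivAt (deriv (sechPowMulCompTanh n f))
      (sechPowMulCompTanh n (fun t => (1 - t ^ 2) * ((1 - t ^ 2) * f'' t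
        - 2 * (n + 1) * t * f' t - n * f t) + n ^ 2 * t ^ 2 * f t) τ) τ := by
  have factor_deriv := ((((hasDerivAt_id (Real.tanh τ)).fun_pow 2).const_sub 1).fun_mul
    (hf' _ (tanh_mem_Ioo τ))).fun_sub
      (((hasDerivAt_id (Real.tanh τ)).const_mul (n : ℝ)).fun_mul (hf _ (tanh_mem_Ioo τ)))
  rw [deriv_sechPowMulCompTanh n hf]
  refine (hasDerivAt_sechPowMulCompTanh n factor_deriv).congr_deriv ?_
  simp only [sechPowMulCompTanh, id_eq]
  push_cast
  ring

theorem radial_equation_of_gegenbauer_equation (m : ℕ) {c : ℝ}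
    (hf : ∀ t ∈ Set.Ioo (-1) 1, HasDerivAt f (f' t) t)
    (hf' : ∀ t ∈ Set.Ioo (-1) 1, HasDerivAt f' (f'' t) t)
    (hode : ∀ t ∈ Set.Ioo (-1) 1,
      (1 - t ^ 2) * f'' t - 2 * (m + 1) * t * f' t + (c - m * (m + 1)) * f t = 0) (τ : ℝ) :
    deriv (deriv (sechPowMulCompTanh (m + 1) f)) τ
        + 2 * Real.tanh τ * deriv (sechPowMulCompTanh (m + 1) f) τ
        + c * (1 / Real.cosh τ) ^ 2 * sechPowMulCompTanh (m + 1) f τ =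
      (m ^ 2 - 1) * sechPowMulCompTanh (m + 1) f τ := by
  rw [(hasDerivAt_deriv_sechPowMulCompTanh (m + 1) hf hf' τ).deriv,
    deriv_sechPowMulCompTanh (m + 1) hf, one_div_cosh_sq]
  simp only [sechPowMulCompTanh]
  push_cast
  linear_combination (1 / Real.cosh τ) ^ (m + 1) * (1 - Real.tanh τ ^ 2) *
    hode (Real.tanh τ) (tanh_mem_Ioo τ)

end HyperbolicSubstitution

/-- The radial part of the p-type scalar harmonic on dS₃ for `ℓ ≥ m`:
`u(τ) = (sech τ)^{m+1} Σ_{k=0}^{ℓ-m} a_k ((1-tanh τ)/2)^k`, with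
`a_k = (-ℓ)_{m+k} (ℓ+1)_{m+k}/(k!(m+k)!)`, is twice differentiable and satisfies
`u'' + 2 tanh τ · u' + ℓ(ℓ+1) sech²τ · u = (m²-1) u` on `ℝ`. -/
theorem stmt12 (m ℓ : ℕ) (hml : m ≤ ℓ) (a : ℕ → ℝ)
    (ha : ∀ k, a k =
      (ascPochhammer ℝ (m + k)).eval (-(ℓ : ℝ)) * (ascPochhammer ℝ (m + k)).eval ((ℓ : ℝ) + 1) /
        ((k.factorial : ℝ) * ((m + k).factorial : ℝ)))
    (u : ℝ → ℝ)
    (hu : ∀ τ, u τ = (1 / Real.cosh τ) ^ (m + 1) *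
        ∑ k ∈ Finset.range (ℓ - m + 1), a k * ((1 - Real.tanh τ) / 2) ^ k) :
    (∀ τ, DifferentiableAt ℝ u τ) ∧ (∀ τ, DifferentiableAt ℝ (deriv u) τ) ∧
      ∀ τ, deriv (deriv u) τ + 2 * Real.tanh τ * deriv u τ +
          (ℓ : ℝ) * ((ℓ : ℝ) + 1) * (1 / Real.cosh τ) ^ 2 * u τ =
        ((m : ℝ) ^ 2 - 1) * u τ := by
  obtain rfl : a = legendreCoeff m (ℓ : ℝ) := funext ha
  set q := legendreFactor ℝ m ℓ
  obtain rfl : u = sechPowMulCompTanh (m + 1) (q.eval ·) :=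
    funext fun τ => by rw [hu, sechPowMulCompTanh, eval_legendreFactor]
  have hq (t : ℝ) (_ : t ∈ Set.Ioo (-1) 1) := q.hasDerivAt t
  have hq' (t : ℝ) (_ : t ∈ Set.Ioo (-1) 1) := q.derivative.hasDerivAt t
  refine ⟨fun τ => (hasDerivAt_sechPowMulCompTanh (m + 1) (q.hasDerivAt _)).differentiableAt,
    fun τ => (hasDerivAt_deriv_sechPowMulCompTanh (m + 1) hq hq' τ).differentiableAt,
    radial_equation_of_gegenbauer_equation m hq hq' fun t _ => ?_⟩
  simpa using congrArg (eval t) (legendreFactor_gegenbauer_equation (K := ℝ) m ℓ)
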